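/- Let 1 ≤ s ≤ t and let G = H_t ∪ W_t. If dim π_s(G^⊥) = dim π_{s−1}(G^⊥), then rank M_s(L) = rank M_{s−1}(L) for every L ∈ K_{t+2s,⪰}. -/

import Mathlib

open MvPolynomial

noncomputable section

/-- The polynomial ring `ℝ[x₁,…,xₙ]`. -/
abbrev MP (n : ℕ) := MvPolynomial (Fin n) ℝ

/-- The total degree `|α|` of a monomial exponent `α`. -/
def mdeg {n : ℕ} (α : Fin n →₀ ℕ) : ℕ := α.sum fun _ e => e

/-- The subspace `ℝ[x]_t` of polynomials of total degree at most `t`. -/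
abbrev RxT (n t : ℕ) : Submodule ℝ (MP n) := restrictTotalDegree (Fin n) ℝ t

/-- The kernel of the moment matrix `M_s(L)`: polynomials `p` of degree at most `s` such that
`L(p·x^β) = 0` for all monomials `x^β` of degree at most `s`. -/
def momKer {n : ℕ} (L : Module.Dual ℝ (MP n)) (s : ℕ) : Set (MP n) :=
  {p | p.totalDegree ≤ s ∧ ∀ β : Fin n →₀ ℕ, mdeg β ≤ s → L (p * monomial β 1) = 0}

/-- Positive semidefiniteness of the moment matrix `M_t(L)`: `L(p²) ≥ 0` for all `p ∈ ℝ[x]_t`. -/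
def momPSD {n : ℕ} (L : Module.Dual ℝ (MP n)) (t : ℕ) : Prop :=
  ∀ p : MP n, p.totalDegree ≤ t → 0 ≤ L (p * p)

/-- The bilinear/moment form of order `s` associated to `L`, as a map `ℝ[x]_s → (ℝ[x]_s)*`;
its matrix in the monomial basis is the moment matrix `M_s(L)`. -/
def momBil {n : ℕ} (L : Module.Dual ℝ (MP n)) (s : ℕ) :
    RxT n s →ₗ[ℝ] Module.Dual ℝ (RxT n s) :=
  LinearMap.mk₂ ℝ (fun p q => L ((p : MP n) * (q : MP n)))
    (fun p p' q => by simp [add_mul])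
    (fun c p q => by simp [smul_mul_assoc])
    (fun p q q' => by simp [mul_add])
    (fun c p q => by simp [mul_smul_comm])

/-- The rank of the moment matrix `M_s(L)`. -/
def momRank {n : ℕ} (L : Module.Dual ℝ (MP n)) (s : ℕ) : ℕ :=
  Module.finrank ℝ (LinearMap.range (momBil L s))

/-- The column of the moment matrix `M_s(L)` indexed by the monomial `β`. -/
def momCol {n : ℕ} (L : Module.Dual ℝ (MP n)) (s : ℕ) (β : Fin n →₀ ℕ) :
    {α : Fin n →₀ ℕ // mdeg α ≤ s} → ℝ :=
  fun α => L (monomial (α.1 + β) 1)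

/-- `G^⊥`: linear functionals vanishing on the set `G`. -/
def annih {n : ℕ} (G : Set (MP n)) : Submodule ℝ (Module.Dual ℝ (MP n)) :=
  (Submodule.span ℝ G).dualAnnihilator

/-- The projection `π_s` sending a linear functional to its restriction to `ℝ[x]_s`. -/
def projDual (n s : ℕ) : Module.Dual ℝ (MP n) →ₗ[ℝ] Module.Dual ℝ (RxT n s) :=
  (RxT n s).subtype.dualMap

/-- `dim π_s(G^⊥)`. -/
def dimProj {n : ℕ} (s : ℕ) (G : Set (MP n)) : ℕ :=
  Module.finrank ℝ (Submodule.map (projDual n s) (annih G))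

/-- The one-degree prolongation `S⁺ = S ∪ x₁S ∪ … ∪ xₙS` of a set of polynomials. -/
def plusOp {n : ℕ} (G : Set (MP n)) : Set (MP n) :=
  G ∪ ⋃ i : Fin n, (fun p => X i * p) '' G

/-- The set `H_t = {x^α h_j : |α| + deg h_j ≤ t}` of prolongations of the generators. -/
def Hset {n m : ℕ} (h : Fin m → MP n) (t : ℕ) : Set (MP n) :=
  {p | ∃ (α : Fin n →₀ ℕ) (j : Fin m), mdeg α + (h j).totalDegree ≤ t ∧ p = monomial α 1 * h j}

/-- The cone `K_{t,⪰}` of linear functionals vanishing on `H_t` with `M_{⌊t/2⌋}(L) ⪰ 0`. -/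
def Kpos {n m : ℕ} (h : Fin m → MP n) (t : ℕ) : Set (Module.Dual ℝ (MP n)) :=
  {L | (∀ g ∈ Hset h t, L g = 0) ∧ momPSD L (t / 2)}

/-- `L*` is generic in `K_{t,⪰}`: it belongs to `K_{t,⪰}` and its moment matrix
`M_{⌊t/2⌋}(L*)` has maximum rank over `K_{t,⪰}`. -/
def Generic {n m : ℕ} (h : Fin m → MP n) (t : ℕ) (Ls : Module.Dual ℝ (MP n)) : Prop :=
  Ls ∈ Kpos h t ∧ ∀ L ∈ Kpos h t, momRank L (t / 2) ≤ momRank Ls (t / 2)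

/-- `W_t = {x^α g : |α| ≤ ⌊t/2⌋, g ∈ N_t}`, with `N_t = Ker M_{⌊t/2⌋}(L*)` for `L*` generic. -/
def Wset {n m : ℕ} (h : Fin m → MP n) (t : ℕ) (Ls : Module.Dual ℝ (MP n)) : Set (MP n) :=
  {p | ∃ (α : Fin n →₀ ℕ) (g : MP n), mdeg α ≤ t / 2 ∧ g ∈ momKer Ls (t / 2) ∧
    p = monomial α 1 * g}

/-- The real radical `√[ℝ]I` of an ideal `I`. -/
def realRad {n : ℕ} (I : Ideal (MP n)) : Set (MP n) :=
  {p | ∃ m : ℕ, 0 < m ∧ ∃ (k : ℕ) (q : Fin k → MP n), p ^ (2 * m) + ∑ j, q j ^ 2 ∈ I}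

/-- A set of monomials closed under taking divisions. -/
def DivClosed {n : ℕ} (B : Set (Fin n →₀ ℕ)) : Prop :=
  ∀ a ∈ B, ∀ a' : Fin n →₀ ℕ, a' ≤ a → a' ∈ B

/-- A set of monomials connected to 1: each `m ∈ B` is a product `m = m₁⋯m_k` with `m₁ = 1`
and all partial products `m₁⋯m_h ∈ B` (written additively on exponents). -/
def ConnectedToOne {n : ℕ} (B : Set (Fin n →₀ ℕ)) : Prop :=
  ∀ a ∈ B, ∃ (k : ℕ) (c : Fin (k + 1) → (Fin n →₀ ℕ)),
    c 0 = 0 ∧ (∀ j : Fin (k + 1), (∑ i ∈ Finset.univ.filter (· ≤ j), c i) ∈ B) ∧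
    (∑ i, c i) = a

/-- `Span_ℝ(B)` for a set `B` of monomials. -/
def spanMon {n : ℕ} (B : Set (Fin n →₀ ℕ)) : Submodule ℝ (MP n) :=
  Submodule.span ℝ ((fun a => (monomial a 1 : MP n)) '' B)

/-- The border `∂B = B⁺ \ B` of a set of monomials. -/
def borderSet {n : ℕ} (B : Set (Fin n →₀ ℕ)) : Set (Fin n →₀ ℕ) :=
  {a | a ∉ B ∧ ∃ i : Fin n, ∃ b ∈ B, a = b + Finsupp.single i 1}

end

/-!
The set `G = H_t ∪ W_t` is annihilated by `L` even after multiplication by `ℝ[x]_s`: for `H_t` this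
is a degree count, and for `W_t = {x^α g}` it holds because genericity of `L*` puts the `g` in
`Ker M_{⌊t/2⌋}(L)`, which positivity of `L` carries over to `Ker M_{⌊t/2⌋+s}(L)`.  Dually, the
dimension hypothesis says that every polynomial in `ℝ[x]_s` is, modulo the span of `G`, a polynomial
of degree at most `s - 1`.  Hence `ℝ[x]_s = ℝ[x]_{s-1} + Ker M_s(L)`, and a symmetric form has the
same rank on any subspace that together with its kernel spans everything.
-/

section BilinearForms

theorem finrank_range_eq_of_ker_eq {R V W W' : Type*} [Ring R] [AddCommGroup V] [Module R V]
    [AddCommGroup W] [Module R W] [AddCommGroup W'] [Module R W'] {f : V →ₗ[R] W}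
    {g : V →ₗ[R] W'} (h : LinearMap.ker f = LinearMap.ker g) :
    Module.finrank R (LinearMap.range f) = Module.finrank R (LinearMap.range g) :=
  (f.quotKerEquivRange.symm ≪≫ₗ Submodule.quotEquivOfEq _ _ h ≪≫ₗ g.quotKerEquivRange).finrank_eq

theorem finrank_range_compl₁₂_eq {R U V : Type*} [CommRing R] [AddCommGroup U] [Module R U]
    [AddCommGroup V] [Module R V] {B : V →ₗ[R] V →ₗ[R] R} (hB : B.IsSymm) {ι : U →ₗ[R] V}
    (h : Codisjoint (LinearMap.range ι) (LinearMap.ker B)) :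
    Module.finrank R (LinearMap.range (B.compl₁₂ ι ι)) =
      Module.finrank R (LinearMap.range B) := by
  have hker : LinearMap.ker (ι.dualMap ∘ₗ B) = LinearMap.ker B := by
    refine le_antisymm (fun x hx => LinearMap.ext fun y => ?_) (LinearMap.ker_le_ker_comp _ _)
    obtain ⟨_, z, ⟨u, rfl⟩, hz, rfl⟩ := Submodule.codisjoint_iff_exists_add_eq.1 h y
    have hxu : B x (ι u) = 0 := LinearMap.congr_fun hx u
    have hxz : B x z = 0 := hB.eq_iff.1 (LinearMap.congr_fun hz x)
    rw [map_add, hxu, hxz, add_zero, LinearMap.zero_apply]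
  calc Module.finrank R (LinearMap.range (B.compl₁₂ ι ι))
      = Module.finrank R (LinearMap.range ((ι.dualMap ∘ₗ B) ∘ₗ ι)) := rfl
    _ = Module.finrank R (LinearMap.range (ι.dualMap ∘ₗ B)) := by
        rw [LinearMap.range_comp, Submodule.map_eq_range_iff.2 (hker.symm ▸ h)]
    _ = Module.finrank R (LinearMap.range B) := finrank_range_eq_of_ker_eq hker

theorem ker_add_eq_inf_of_isPosSemidef {R V : Type*} [CommRing R] [LinearOrder R]
    [IsStrictOrderedRing R] [AddCommGroup V] [Module R V] {B C : V →ₗ[R] V →ₗ[R] R}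
    (hB : B.IsPosSemidef) (hC : C.IsPosSemidef) :
    LinearMap.ker (B + C) = LinearMap.ker B ⊓ LinearMap.ker C := by
  ext x
  rw [Submodule.mem_inf,
    ← LinearMap.BilinForm.apply_apply_same_eq_zero_iff _ (hB.add hC).nonneg (hB.add hC).isSymm,
    ← LinearMap.BilinForm.apply_apply_same_eq_zero_iff _ hB.nonneg hB.isSymm,
    ← LinearMap.BilinForm.apply_apply_same_eq_zero_iff _ hC.nonneg hC.isSymm,
    LinearMap.add_apply, LinearMap.add_apply]
  exact add_eq_zero_iff_of_nonneg (hB.nonneg x) (hC.nonneg x)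

theorem ker_le_ker_of_finrank_range_add_le {K V : Type*} [Field K] [LinearOrder K]
    [IsStrictOrderedRing K] [AddCommGroup V] [Module K V] [FiniteDimensional K V]
    {B C : V →ₗ[K] V →ₗ[K] K} (hB : B.IsPosSemidef) (hC : C.IsPosSemidef)
    (h : Module.finrank K (LinearMap.range (B + C)) ≤ Module.finrank K (LinearMap.range C)) :
    LinearMap.ker C ≤ LinearMap.ker B := by
  have hinf := ker_add_eq_inf_of_isPosSemidef hB hC
  have hfinrank : Module.finrank K (LinearMap.ker C) ≤
      Module.finrank K (LinearMap.ker (B + C)) := by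
    have hC_rank := LinearMap.finrank_range_add_finrank_ker C
    have hBC_rank := LinearMap.finrank_range_add_finrank_ker (B + C)
    omega
  have heq : LinearMap.ker (B + C) = LinearMap.ker C :=
    Submodule.eq_of_le_of_finrank_le (hinf.trans_le inf_le_right) hfinrank
  exact heq.symm.trans_le (hinf.trans_le inf_le_left)

end BilinearForms

theorem le_sup_of_finrank_map_dualAnnihilator_eq {K M : Type*} [Field K] [AddCommGroup M]
    [Module K M] {U W : Submodule K M} [FiniteDimensional K W] (hUW : U ≤ W) (N : Submodule K M)
    (h : Module.finrank K (N.dualAnnihilator.map W.subtype.dualMap) =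
      Module.finrank K (N.dualAnnihilator.map U.subtype.dualMap)) :
    W ≤ U ⊔ N := by
  let ρ : Module.Dual K W →ₗ[K] Module.Dual K U := (Submodule.inclusion hUW).dualMap
  let V := N.dualAnnihilator.map W.subtype.dualMap
  have hV : V.map ρ = N.dualAnnihilator.map U.subtype.dualMap := (Submodule.map_comp _ _ _).symm
  have hfinrank : Module.finrank K V = Module.finrank K (V.map ρ) := by rw [hV, h]
  have hinj : Function.Injective (ρ.submoduleMap V) :=
    (LinearMap.injective_iff_surjective_of_finrank_eq_finrank (V := V) (V₂ := V.map ρ) hfinrank).2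
      (ρ.submoduleMap_surjective V)
  rw [← Subspace.dualAnnihilator_le_dualAnnihilator_iff, Submodule.dualAnnihilator_sup_eq]
  rintro f ⟨hfU, hfN⟩
  let fW : V := ⟨W.subtype.dualMap f, Submodule.mem_map_of_mem hfN⟩
  have hfW : fW = 0 := hinj <| Subtype.ext <| LinearMap.ext fun u =>
    (Submodule.mem_dualAnnihilator f).1 hfU u u.2
  exact (Submodule.mem_dualAnnihilator f).2 fun w hw =>
    LinearMap.congr_fun (congrArg Subtype.val hfW) ⟨w, hw⟩

section MomentMatrices

variable {n m : ℕ} {L : Module.Dual ℝ (MP n)} {h : Fin m → MP n}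

theorem RxT_mono {k s : ℕ} (hks : k ≤ s) : RxT n k ≤ RxT n s :=
  restrictSupport_mono ℝ fun _ hα => le_trans hα hks

theorem totalDegree_monomial_mul_le (α : Fin n →₀ ℕ) (p : MP n) :
    (monomial α 1 * p).totalDegree ≤ mdeg α + p.totalDegree :=
  (totalDegree_mul _ _).trans (Nat.add_le_add_right (totalDegree_monomial_le α 1) _)

theorem map_mul_eq_zero_of_forall_monomial {p q : MP n} {d : ℕ}
    (hp : ∀ β : Fin n →₀ ℕ, mdeg β ≤ d → L (p * monomial β 1) = 0) (hq : q.totalDegree ≤ d) :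
    L (p * q) = 0 := by
  have hle : RxT n d ≤ LinearMap.ker (L ∘ₗ LinearMap.mulLeft ℝ p) := by
    rw [RxT, restrictTotalDegree, restrictSupport_eq_span, Submodule.span_le]
    rintro _ ⟨β, hβ, rfl⟩
    exact hp β hβ
  exact hle ((mem_restrictTotalDegree _ _ _).2 hq)

theorem coe_mem_momKer_iff {s : ℕ} (p : RxT n s) :
    (p : MP n) ∈ momKer L s ↔ p ∈ LinearMap.ker (momBil L s) := by
  refine ⟨fun hp => LinearMap.ext fun q => ?_, fun hp => ⟨?_, fun β hβ => ?_⟩⟩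
  · exact map_mul_eq_zero_of_forall_monomial hp.2 ((mem_restrictTotalDegree _ _ _).1 q.2)
  · exact (mem_restrictTotalDegree _ _ _).1 p.2
  · exact LinearMap.congr_fun hp
      ⟨monomial β 1, (mem_restrictTotalDegree _ _ _).2 ((totalDegree_monomial_le β 1).trans hβ)⟩

theorem momBil_isSymm (L : Module.Dual ℝ (MP n)) (s : ℕ) : (momBil L s).IsSymm :=
  ⟨fun p q => congrArg L (mul_comm (p : MP n) q)⟩

theorem momBil_add (L₁ L₂ : Module.Dual ℝ (MP n)) (s : ℕ) :
    momBil (L₁ + L₂) s = momBil L₁ s + momBil L₂ s :=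
  rfl

theorem momPSD.isPosSemidef_momBil {s : ℕ} (hL : momPSD L s) : (momBil L s).IsPosSemidef where
  isSymm := momBil_isSymm L s
  nonneg p := hL p ((mem_restrictTotalDegree _ _ _).1 p.2)

theorem momPSD.mono {d e : ℕ} (hde : d ≤ e) (hL : momPSD L e) : momPSD L d :=
  fun p hp => hL p (hp.trans hde)

theorem momPSD.mem_momKer_iff {s : ℕ} (hL : momPSD L s) {p : MP n} (hp : p.totalDegree ≤ s) :
    p ∈ momKer L s ↔ L (p * p) = 0 := by
  let p' : RxT n s := ⟨p, (mem_restrictTotalDegree _ _ _).2 hp⟩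
  have hpsd := hL.isPosSemidef_momBil
  exact (coe_mem_momKer_iff p').trans
    (LinearMap.BilinForm.apply_apply_same_eq_zero_iff _ hpsd.nonneg hpsd.isSymm).symm

theorem momPSD.momKer_subset_momKer {d e : ℕ} (hde : d ≤ e) (hL : momPSD L e) :
    momKer L d ⊆ momKer L e := fun _ hp =>
  (hL.mem_momKer_iff (hp.1.trans hde)).2 (((hL.mono hde).mem_momKer_iff hp.1).1 hp)

theorem Hset_mono {t t' : ℕ} (htt' : t ≤ t') : Hset h t ⊆ Hset h t' := by
  rintro _ ⟨α, j, hα, rfl⟩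
  exact ⟨α, j, hα.trans htt', rfl⟩

theorem add_mem_Kpos {t : ℕ} {L₁ L₂ : Module.Dual ℝ (MP n)} (h₁ : L₁ ∈ Kpos h t)
    (h₂ : L₂ ∈ Kpos h t) : L₁ + L₂ ∈ Kpos h t := by
  refine ⟨fun g hg => ?_, fun p hp => add_nonneg (h₁.2 p hp) (h₂.2 p hp)⟩
  rw [LinearMap.add_apply, h₁.1 g hg, h₂.1 g hg, add_zero]

theorem Generic.momKer_subset_momKer {t : ℕ} {Ls : Module.Dual ℝ (MP n)} (hgen : Generic h t Ls)
    (hL : L ∈ Kpos h t) : momKer Ls (t / 2) ⊆ momKer L (t / 2) := by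
  intro g hg
  let g' : RxT n (t / 2) := ⟨g, (mem_restrictTotalDegree _ _ _).2 hg.1⟩
  have hker : LinearMap.ker (momBil Ls (t / 2)) ≤ LinearMap.ker (momBil L (t / 2)) := by
    refine ker_le_ker_of_finrank_range_add_le hL.2.isPosSemidef_momBil
      hgen.1.2.isPosSemidef_momBil ?_
    rw [← momBil_add]
    exact hgen.2 _ (add_mem_Kpos hL hgen.1)
  exact (coe_mem_momKer_iff g').2 (hker ((coe_mem_momKer_iff g').1 hg))

theorem map_mul_eq_zero_of_mem_Hset {s t : ℕ} (hL : ∀ g ∈ Hset h (t + s), L g = 0) {g r : MP n}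
    (hg : g ∈ Hset h t) (hr : r.totalDegree ≤ s) : L (g * r) = 0 := by
  obtain ⟨α, j, hα, rfl⟩ := hg
  refine map_mul_eq_zero_of_forall_monomial (fun β hβ => hL _ ⟨α + β, j, ?_, ?_⟩) hr
  · have hαβ : mdeg (α + β) = mdeg α + mdeg β :=
      Finsupp.sum_add_index' (fun _ => rfl) fun _ _ _ => rfl
    omega
  · rw [mul_right_comm, monomial_mul, one_mul]

theorem map_mul_eq_zero_of_mem_Wset {s t : ℕ} {Ls : Module.Dual ℝ (MP n)}
    (hker : momKer Ls (t / 2) ⊆ momKer L (t / 2 + s)) {g r : MP n} (hg : g ∈ Wset h t Ls)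
    (hr : r.totalDegree ≤ s) : L (g * r) = 0 := by
  obtain ⟨α, g, hα, hg, rfl⟩ := hg
  rw [mul_comm (monomial α 1) g, mul_assoc]
  exact map_mul_eq_zero_of_forall_monomial (hker hg).2
    ((totalDegree_monomial_mul_le α r).trans (Nat.add_le_add hα hr))

theorem momRank_eq_of_RxT_le_sup {k s : ℕ} (hks : k ≤ s) {N : Submodule ℝ (MP n)}
    (hN : ∀ g ∈ N, ∀ r : MP n, r.totalDegree ≤ s → L (g * r) = 0) (hle : RxT n s ≤ RxT n k ⊔ N) :
    momRank L s = momRank L k := by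
  let ι : RxT n k →ₗ[ℝ] RxT n s := Submodule.inclusion (RxT_mono hks)
  suffices hcodisjoint : Codisjoint (LinearMap.range ι) (LinearMap.ker (momBil L s)) from
    (finrank_range_compl₁₂_eq (momBil_isSymm L s) hcodisjoint).symm
  refine codisjoint_iff_le_sup.2 fun p _ => ?_
  obtain ⟨q, hq, g, hg, hqg⟩ := Submodule.mem_sup.1 (hle p.2)
  have hker : p - ι ⟨q, hq⟩ ∈ LinearMap.ker (momBil L s) := LinearMap.ext fun r => by
    change L (((p : MP n) - q) * r) = 0
    rw [← hqg, add_sub_cancel_left]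
    exact hN g hg r ((mem_restrictTotalDegree _ _ _).1 r.2)
  exact Submodule.mem_sup.2 ⟨ι ⟨q, hq⟩, ⟨_, rfl⟩, _, hker, add_sub_cancel _ _⟩

theorem momRank_eq_of_dimProj_eq_general {k s t : ℕ} (hks : k ≤ s)
    {Lstar : Module.Dual ℝ (MP n)} (hgen : Generic h t Lstar)
    (hdim : dimProj s (Hset h t ∪ Wset h t Lstar) = dimProj k (Hset h t ∪ Wset h t Lstar))
    (hH : ∀ g ∈ Hset h (t + s), L g = 0) (hpsd : momPSD L (t / 2 + s)) :
    momRank L s = momRank L k := by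
  have hLt : L ∈ Kpos h t :=
    ⟨fun g hg => hH g (Hset_mono (Nat.le_add_right t s) hg), hpsd.mono (Nat.le_add_right _ s)⟩
  have hker : momKer Lstar (t / 2) ⊆ momKer L (t / 2 + s) :=
    (hgen.momKer_subset_momKer hLt).trans (hpsd.momKer_subset_momKer (Nat.le_add_right _ s))
  refine momRank_eq_of_RxT_le_sup hks (fun g hg r hr => ?_)
    (le_sup_of_finrank_map_dualAnnihilator_eq (RxT_mono hks) _ hdim)
  suffices hspan : Submodule.span ℝ (Hset h t ∪ Wset h t Lstar) ≤
      LinearMap.ker (L ∘ₗ LinearMap.mulRight ℝ r) from hspan hg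
  exact Submodule.span_le.2 <| Set.union_subset
    (fun _ hg => map_mul_eq_zero_of_mem_Hset hH hg hr)
    (fun _ hg => map_mul_eq_zero_of_mem_Wset hker hg hr)

end MomentMatrices

/-- Let `1 ≤ s ≤ t` and `G = H_t ∪ W_t`.  If
`dim π_s(G^⊥) = dim π_{s−1}(G^⊥)`, then `rank M_s(L) = rank M_{s−1}(L)` for every
`L ∈ K_{t+2s,⪰}`. -/
theorem momRank_eq_of_dimProj_eq {n m s t : ℕ} (h : Fin m → MP n)
    (hs1 : 1 ≤ s) (hst : s ≤ t)
    (Lstar : Module.Dual ℝ (MP n)) (hgen : Generic h t Lstar)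
    (hdim : dimProj s (Hset h t ∪ Wset h t Lstar) =
      dimProj (s - 1) (Hset h t ∪ Wset h t Lstar)) :
    ∀ L ∈ Kpos h (t + 2 * s), momRank L s = momRank L (s - 1) := by
  intro L hL
  exact momRank_eq_of_dimProj_eq_general (Nat.sub_le s 1) hgen hdim
    (fun g hg => hL.1 g (Hset_mono (by omega) hg)) (hL.2.mono (by omega))
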